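/- arXiv:2605.12268 — 3 statements merged into one kernel-verified Lean document; each statement's English description precedes it below -/
import Mathlib

section
/- If d ≡ 0 (mod 4) and d+1 is a perfect square, then for every m ∈ ℚ_{>0} there is a regular d-simplex of squared edge length m with vertices in ℚ^d; if d ≡ 0 (mod 4) and d+1 is not a perfect square, then no regular d-simplex with vertices in ℚ^d exists. -/
/-- A regular `d`-simplex in `ℚⁿ` of squared edge length `m`. -/
def IsRegularSimplex (d n : ℕ) (m : ℚ) (v : Fin (d + 1) → Fin n → ℚ) : Prop :=
  AffineIndependent ℚ v ∧ ∀ i j, i ≠ j → ∑ k, (v i k - v j k) ^ 2 = m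

/-!
The edge vectors of a regular `d`-simplex at one vertex have Gram matrix `m / 2 • (1 + J)`, where
`J` is the all-ones matrix. Its determinant is `(m / 2) ^ d * (d + 1)`, and in full dimension it is
also the square of the determinant of the edge vectors; for even `d` this makes `d + 1` a square.
Conversely, if `d + 1 = u ^ 2` then `1 + J = A * Aᵀ` with `A = 1 + (u + 1)⁻¹ • J`. By Lagrange's
theorem `m / 2` is the norm of a rational quaternion, so when `4 ∣ d` diagonal copies of its
multiplication matrix give `B` with `B * Bᵀ = m / 2 • 1`, and the rows of `A * B` are the edge
vectors sought.
-/

open scoped Matrix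

section SimplexGram

variable {ι R K : Type*} [DecidableEq ι]

/-- The matrix `1 + J`, with `J` the all-ones matrix: the Gram matrix of the edge vectors at a
vertex of a regular simplex of squared edge length `2`. -/
def simplexGram (ι R : Type*) [DecidableEq ι] [Semiring R] : Matrix ι ι R :=
  1 + Matrix.of fun _ _ => 1

theorem simplexGram_apply [Semiring R] (i j : ι) :
    simplexGram ι R i j = (if i = j then 1 else 0) + 1 := by
  simp [simplexGram, Matrix.one_apply]

theorem eq_smul_simplexGram_iff [Semiring R] {G : Matrix ι ι R} {c : R} :
    G = c • simplexGram ι R ↔ (∀ i, G i i = 2 * c) ∧ ∀ i j, i ≠ j → G i j = c := by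
  simp only [← Matrix.ext_iff, Matrix.smul_apply, simplexGram_apply, smul_eq_mul]
  constructor
  · intro h
    exact ⟨fun i => by simp [h, two_mul, mul_add], fun i j hij => by simp [h, hij]⟩
  · rintro ⟨diag, offDiag⟩ i j
    rcases eq_or_ne i j with rfl | hij
    · simp [diag, two_mul, mul_add]
    · simp [offDiag i j hij, hij]

variable [Fintype ι]

theorem det_simplexGram [CommRing R] : (simplexGram ι R).det = Fintype.card ι + 1 := by
  have allOnes_eq : (Matrix.of fun _ _ => 1 : Matrix ι ι R) =
      Matrix.replicateCol Unit (1 : ι → R) * Matrix.replicateRow Unit (1 : ι → R) := by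
    ext i j
    simp [Matrix.mul_apply]
  rw [simplexGram, allOnes_eq, Matrix.det_one_add_replicateCol_mul_replicateRow]
  simp [dotProduct, add_comm]

theorem det_sq_of_mul_transpose_eq_smul_simplexGram [CommRing R] {W : Matrix ι ι R} {c : R}
    (hW : W * Wᵀ = c • simplexGram ι R) :
    W.det ^ 2 = c ^ Fintype.card ι * (Fintype.card ι + 1) := by
  rw [← det_simplexGram, ← Matrix.det_smul, ← hW, Matrix.det_mul, Matrix.det_transpose, sq]

theorem exists_mul_transpose_eq_simplexGram [Field K] {u : K}
    (hu : (Fintype.card ι : K) + 1 = u ^ 2) (hu₁ : u + 1 ≠ 0) :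
    ∃ A : Matrix ι ι K, A * Aᵀ = simplexGram ι K := by
  have hc : 2 * (u + 1)⁻¹ + Fintype.card ι * (u + 1)⁻¹ ^ 2 = 1 := by
    field_simp
    linear_combination hu
  refine ⟨1 + (u + 1)⁻¹ • Matrix.of fun _ _ => 1, ?_⟩
  rw [Matrix.transpose_add, Matrix.transpose_one, Matrix.transpose_smul, mul_add, add_mul, add_mul]
  ext i j
  simp only [simplexGram, Matrix.add_apply, Matrix.mul_one, Matrix.one_mul, Matrix.smul_apply,
    Matrix.mul_apply, Matrix.of_apply, Matrix.transpose_apply, smul_eq_mul, Finset.sum_const,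
    Finset.card_univ, nsmul_eq_mul]
  linear_combination hc

end SimplexGram

section Similarity

variable {R : Type*} [CommRing R]

/-- The matrix of left multiplication by the quaternion `a + b i + c j + e k` in the basis
`1, i, j, k`, used as a similarity of `R⁴` whose multiplier is a sum of four squares. -/
def quaternionMatrix (a b c e : R) : Matrix (Fin 4) (Fin 4) R :=
  !![a, -b, -c, -e; b, a, -e, c; c, e, a, -b; e, -c, b, a]

theorem quaternionMatrix_mul_transpose (a b c e : R) :
    quaternionMatrix a b c e * (quaternionMatrix a b c e)ᵀ =
      (a ^ 2 + b ^ 2 + c ^ 2 + e ^ 2) • 1 := by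
  ext i j
  fin_cases i <;> fin_cases j <;>
    simp [quaternionMatrix, Matrix.mul_apply, Fin.sum_univ_four] <;> ring

theorem exists_mul_transpose_eq_sum_four_squares_smul_one {ι : Type*} [Fintype ι] [DecidableEq ι]
    (hι : 4 ∣ Fintype.card ι) (a b c e : R) :
    ∃ B : Matrix ι ι R, B * Bᵀ = (a ^ 2 + b ^ 2 + c ^ 2 + e ^ 2) • 1 := by
  obtain ⟨k, hk⟩ := hι
  let f : ι ≃ Fin 4 × Fin k := Fintype.equivOfCardEq (by simpa using hk)
  let M := Matrix.blockDiagonal fun _ : Fin k => quaternionMatrix a b c e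
  have hM : M * Mᵀ = (a ^ 2 + b ^ 2 + c ^ 2 + e ^ 2) • 1 := by
    calc
      M * Mᵀ = Matrix.blockDiagonal ((a ^ 2 + b ^ 2 + c ^ 2 + e ^ 2) • 1) := by
        rw [Matrix.blockDiagonal_transpose, ← Matrix.blockDiagonal_mul]
        exact congrArg _ (funext fun _ => quaternionMatrix_mul_transpose a b c e)
      _ = (a ^ 2 + b ^ 2 + c ^ 2 + e ^ 2) • 1 := by
        rw [Matrix.blockDiagonal_smul, Matrix.blockDiagonal_one]
  refine ⟨M.submatrix f f, ?_⟩
  rw [Matrix.transpose_submatrix, Matrix.submatrix_mul_equiv, hM]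
  ext i j
  simp [Matrix.one_apply]

end Similarity

theorem exists_rat_sum_four_squares {q : ℚ} (hq : 0 ≤ q) :
    ∃ a b c e : ℚ, a ^ 2 + b ^ 2 + c ^ 2 + e ^ 2 = q := by
  lift q to ℚ≥0 using hq
  obtain ⟨a, b, c, e, h⟩ := Nat.sum_four_squares (q.num * q.den)
  have h' : (a : ℚ) ^ 2 + b ^ 2 + c ^ 2 + e ^ 2 = q.num * q.den := by exact_mod_cast h
  have hden : (q.den : ℚ) ≠ 0 := by exact_mod_cast q.den_ne_zero
  refine ⟨a / q.den, b / q.den, c / q.den, e / q.den, ?_⟩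
  calc
    _ = ((a : ℚ) ^ 2 + b ^ 2 + c ^ 2 + e ^ 2) / q.den ^ 2 := by ring
    _ = q.num / q.den := by rw [h']; field_simp
    _ = q := (NNRat.cast_def q).symm

section EdgeMatrix

variable {R K κ : Type*} {d : ℕ}

/-- The matrix whose rows are the edge vectors `v (i + 1) - v 0` from the vertex `v 0`. -/
def edgeMatrix [AddGroup R] (v : Fin (d + 1) → κ → R) : Matrix (Fin d) κ R :=
  Matrix.of fun i k => v i.succ k - v 0 k

theorem edgeMatrix_cons_zero [AddGroup R] (W : Matrix (Fin d) κ R) :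
    edgeMatrix (Fin.cons 0 W.row : Fin (d + 1) → κ → R) = W := by
  ext i k
  simp [edgeMatrix]

theorem affineIndependent_iff_linearIndependent_edgeMatrix [Ring R] {v : Fin (d + 1) → κ → R} :
    AffineIndependent R v ↔ LinearIndependent R (edgeMatrix v).row := by
  rw [affineIndependent_iff_linearIndependent_vsub R v 0,
    ← linearIndependent_equiv (finSuccAboveEquiv (0 : Fin (d + 1)))]
  rfl

variable [Fintype κ]

theorem sum_sq_sub_zero_eq_edgeMatrix_gram [CommRing R] (v : Fin (d + 1) → κ → R) (i : Fin d) :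
    ∑ k, (v i.succ k - v 0 k) ^ 2 = (edgeMatrix v * (edgeMatrix v)ᵀ) i i := by
  simp [edgeMatrix, Matrix.mul_apply, sq]

theorem sum_sq_sub_succ_eq_edgeMatrix_gram [CommRing R] (v : Fin (d + 1) → κ → R) (i j : Fin d) :
    ∑ k, (v i.succ k - v j.succ k) ^ 2 =
      (edgeMatrix v * (edgeMatrix v)ᵀ) i i + (edgeMatrix v * (edgeMatrix v)ᵀ) j j -
        2 * (edgeMatrix v * (edgeMatrix v)ᵀ) i j := by
  simp only [Matrix.mul_apply, Matrix.transpose_apply, edgeMatrix, Matrix.of_apply,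
    Finset.mul_sum, ← Finset.sum_add_distrib, ← Finset.sum_sub_distrib]
  exact Finset.sum_congr rfl fun k _ => by ring

theorem forall_sum_sq_sub_eq_iff_edgeMatrix_gram_apply [CommRing R] {m : R}
    {v : Fin (d + 1) → κ → R} :
    (∀ i j, i ≠ j → ∑ k, (v i k - v j k) ^ 2 = m) ↔
      (∀ i, (edgeMatrix v * (edgeMatrix v)ᵀ) i i = m) ∧
        ∀ i j, i ≠ j → 2 * (edgeMatrix v * (edgeMatrix v)ᵀ) i j = m := by
  set G := edgeMatrix v * (edgeMatrix v)ᵀ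
  have dist_zero (i : Fin d) : ∑ k, (v i.succ k - v 0 k) ^ 2 = G i i :=
    sum_sq_sub_zero_eq_edgeMatrix_gram v i
  have dist_succ (i j : Fin d) : ∑ k, (v i.succ k - v j.succ k) ^ 2 = G i i + G j j - 2 * G i j :=
    sum_sq_sub_succ_eq_edgeMatrix_gram v i j
  constructor
  · intro h
    have diag (i : Fin d) : G i i = m := (dist_zero i).symm.trans (h _ _ i.succ_ne_zero)
    refine ⟨diag, fun i j hij => ?_⟩
    linear_combination
      diag i + diag j + dist_succ i j - h _ _ ((Fin.succ_injective d).ne hij)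
  · rintro ⟨diag, offDiag⟩
    refine Fin.cases (Fin.cases (absurd rfl) fun j _ => ?_)
      fun i => Fin.cases (fun _ => (dist_zero i).trans (diag i)) fun j hij => ?_
    · simpa only [sub_sq_comm (v 0 _)] using (dist_zero j).trans (diag j)
    · linear_combination
        dist_succ i j + diag i + diag j - offDiag i j (ne_of_apply_ne Fin.succ hij)

theorem forall_sum_sq_sub_eq_iff_edgeMatrix_gram [Field K] [NeZero (2 : K)] {m : K}
    {v : Fin (d + 1) → κ → K} :
    (∀ i j, i ≠ j → ∑ k, (v i k - v j k) ^ 2 = m) ↔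
      edgeMatrix v * (edgeMatrix v)ᵀ = (m / 2) • simplexGram (Fin d) K := by
  rw [forall_sum_sq_sub_eq_iff_edgeMatrix_gram_apply, eq_smul_simplexGram_iff,
    mul_div_cancel₀ m (two_ne_zero' K)]
  simp only [eq_div_iff (two_ne_zero' K), mul_comm]

end EdgeMatrix

theorem isRegularSimplex_iff_edgeMatrix {d n : ℕ} {m : ℚ} {v : Fin (d + 1) → Fin n → ℚ} :
    IsRegularSimplex d n m v ↔ LinearIndependent ℚ (edgeMatrix v).row ∧
      edgeMatrix v * (edgeMatrix v)ᵀ = (m / 2) • simplexGram (Fin d) ℚ :=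
  and_congr affineIndependent_iff_linearIndependent_edgeMatrix
    forall_sum_sq_sub_eq_iff_edgeMatrix_gram

theorem isRegularSimplex_iff_edgeMatrix_det {d : ℕ} {m : ℚ} {v : Fin (d + 1) → Fin d → ℚ} :
    IsRegularSimplex d d m v ↔ (edgeMatrix v).det ≠ 0 ∧
      edgeMatrix v * (edgeMatrix v)ᵀ = (m / 2) • simplexGram (Fin d) ℚ := by
  rw [isRegularSimplex_iff_edgeMatrix, Matrix.linearIndependent_rows_iff_isUnit,
    Matrix.isUnit_iff_isUnit_det, isUnit_iff_ne_zero]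

theorem IsRegularSimplex.isSquare_succ {d : ℕ} {m : ℚ} {v : Fin (d + 1) → Fin d → ℚ}
    (h : IsRegularSimplex d d m v) (hd : Even d) : IsSquare (d + 1) := by
  obtain ⟨hdet, hgram⟩ := isRegularSimplex_iff_edgeMatrix_det.mp h
  have hsq := det_sq_of_mul_transpose_eq_smul_simplexGram hgram
  rw [Fintype.card_fin] at hsq
  have hpow : (m / 2) ^ d ≠ 0 := left_ne_zero_of_mul (hsq ▸ pow_ne_zero 2 hdet)
  rw [← Rat.isSquare_natCast_iff, Nat.cast_succ,
    eq_div_of_mul_eq hpow ((mul_comm _ _).trans hsq.symm)]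
  exact (IsSquare.sq _).div (hd.isSquare_pow _)

theorem exists_isRegularSimplex_of_isSquare_succ {d : ℕ} (hd : 4 ∣ d) (hsq : IsSquare (d + 1))
    {m : ℚ} (hm : 0 < m) : ∃ v : Fin (d + 1) → Fin d → ℚ, IsRegularSimplex d d m v := by
  obtain ⟨u, hu⟩ := (isSquare_iff_exists_sq _).mp hsq
  have hu' : (Fintype.card (Fin d) : ℚ) + 1 = (u : ℚ) ^ 2 := by
    rw [Fintype.card_fin]
    exact_mod_cast hu
  obtain ⟨A, hA⟩ := exists_mul_transpose_eq_simplexGram hu' u.cast_add_one_ne_zero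
  obtain ⟨a, b, c, e, hq⟩ := exists_rat_sum_four_squares (half_pos hm).le
  obtain ⟨B, hB⟩ := exists_mul_transpose_eq_sum_four_squares_smul_one
    ((Fintype.card_fin d).symm ▸ hd) a b c e
  have hgram : (A * B) * (A * B)ᵀ = (m / 2) • simplexGram (Fin d) ℚ := by
    rw [Matrix.transpose_mul, Matrix.mul_assoc, ← Matrix.mul_assoc B, hB, hq, Matrix.smul_mul,
      Matrix.one_mul, Matrix.mul_smul, hA]
  have hdet : (A * B).det ^ 2 ≠ 0 := by
    rw [det_sq_of_mul_transpose_eq_smul_simplexGram hgram]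
    positivity
  refine ⟨Fin.cons 0 (A * B).row, isRegularSimplex_iff_edgeMatrix_det.mpr ?_⟩
  rw [edgeMatrix_cons_zero]
  exact ⟨(pow_ne_zero_iff two_ne_zero).mp hdet, hgram⟩

/-- For `d ≡ 0 (mod 4)`: if `d + 1` is a perfect square then every positive rational is a
squared edge length of a regular `d`-simplex in `ℚ^d`; otherwise no such simplex exists. -/
theorem codim_zero_zero_mod_four (d : ℕ) (hd1 : 1 ≤ d) (hd : d % 4 = 0) :
    ((∃ u : ℕ, d + 1 = u ^ 2) →
        ∀ m : ℚ, 0 < m → ∃ v : Fin (d + 1) → Fin d → ℚ, IsRegularSimplex d d m v) ∧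
      ((¬ ∃ u : ℕ, d + 1 = u ^ 2) →
        ¬ ∃ (m : ℚ) (v : Fin (d + 1) → Fin d → ℚ), IsRegularSimplex d d m v) := by
  have four_dvd : 4 ∣ d := Nat.dvd_of_mod_eq_zero hd
  have even_d : Even d := even_iff_two_dvd.mpr ((by norm_num : 2 ∣ 4).trans four_dvd)
  rw [← isSquare_iff_exists_sq]
  refine ⟨fun hsq m hm => exists_isRegularSimplex_of_isSquare_succ four_dvd hsq hm, ?_⟩
  rintro hnsq ⟨m, v, hv⟩
  exact hnsq (hv.isSquare_succ even_d)
end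

section
/- If d ≡ 1 (mod 4) and n = d + 1, then a positive rational m = 2a occurs as the squared edge length of a regular d-simplex with vertices in ℚⁿ if and only if a is a sum of two rational squares. -/
/-!
As in the proof of the Bruck–Ryser theorem, put `n = d + 1 = 4k + 2`. The vertices `vᵢ` of a
regular simplex of squared edge length `2a` give a map `c ↦ ∑ cᵢ vᵢ` which multiplies the form
`∑ cᵢ²` by `a` on the hyperplane `∑ cᵢ = 0`. By Lagrange, `a` is the norm of a quaternion, so some
matrix multiplies the form by `a` on the first `4k` coordinates. Since `4k < n - 1`, there is a
nonzero vector of the hyperplane at which these `4k` values of the two maps agree up to signs of our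
choice, and cancelling their squares leaves `A² + B² = a (C² + D²)` in the last two coordinates.
A suitable choice of the signs makes `(C, D) ≠ 0`.
Conversely, if `a = x² + y²`, then multiplication by `x + iy` on `n / 2` planes carries the standard
basis to the vertices of such a simplex.
-/

open Function Matrix

section SignChoice

variable {K V W ι : Type*} [Field K] [NeZero (2 : K)] [AddCommGroup V] [Module K V]
  [AddCommGroup W] [Module K W]

theorem exists_units_disjoint_ker_sub_smul (f : V →ₗ[K] K) {g : V →ₗ[K] K} {H : Submodule K V}
    (hg : Disjoint H g.ker) : ∃ ε : ℤˣ, Disjoint H (f - ε • g).ker := by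
  suffices h : Disjoint H (f - g).ker ∨ Disjoint H (f + g).ker by
    rcases h with h | h
    · exact ⟨1, by simpa using h⟩
    · exact ⟨-1, by simpa [Units.smul_def] using h⟩
  simp only [Submodule.disjoint_def, LinearMap.mem_ker, LinearMap.sub_apply, LinearMap.add_apply,
    sub_eq_zero, add_eq_zero_iff_eq_neg] at hg ⊢
  by_contra! ⟨⟨x, hxH, hfx, hx⟩, y, hyH, hfy, hy⟩
  have hdep : g x • y - g y • x = 0 :=
    hg _ (H.sub_mem (H.smul_mem _ hyH) (H.smul_mem _ hxH)) (by simp [mul_comm])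
  have hmul : 2 * (g x * g y) = 0 := by
    have := congrArg f hdep
    simp only [map_sub, map_smul, smul_eq_mul, map_zero, hfx, hfy] at this
    linear_combination -this
  rcases (by simpa [two_ne_zero] using hmul) with h | h
  · exact hx (hg x hxH h)
  · exact hy (hg y hyH h)

theorem exists_units_disjoint_iInf_ker_sub_smul (f g : ι → V →ₗ[K] K) (s : Finset ι)
    {H : Submodule K V} (hg : Disjoint H (⨅ i ∈ s, (g i).ker)) :
    ∃ ε : ι → ℤˣ, Disjoint H (⨅ i ∈ s, (f i - ε i • g i).ker) := by
  classical
  induction s using Finset.induction_on generalizing H with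
  | empty => exact ⟨1, by simpa using hg⟩
  | insert i s his ih =>
    rw [Finset.iInf_insert, inf_comm, ← disjoint_assoc] at hg
    obtain ⟨σ, hσ⟩ := exists_units_disjoint_ker_sub_smul (f i) hg
    rw [disjoint_assoc, inf_comm, ← disjoint_assoc] at hσ
    obtain ⟨ε, hε⟩ := ih hσ
    have hupdate : ∀ j ∈ s, update ε i σ j = ε j := fun j hj =>
      update_of_ne (ne_of_mem_of_not_mem hj his) σ ε
    refine ⟨update ε i σ, ?_⟩
    rwa [Finset.iInf_insert, update_self, ← disjoint_assoc,
      biInf_congr fun j hj => by rw [hupdate j hj]]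

theorem exists_sq_eq_sq_of_card_lt_finrank [Fintype ι] (f g : V →ₗ[K] ι → K) (p : V →ₗ[K] W)
    (hpg : Disjoint p.ker g.ker) (hι : Fintype.card ι < Module.finrank K V) :
    ∃ x, (∀ i, f x i ^ 2 = g x i ^ 2) ∧ p x ≠ 0 := by
  have := Module.finite_of_finrank_pos (Nat.zero_lt_of_lt hι)
  let coord (h : V →ₗ[K] ι → K) (i : ι) : V →ₗ[K] K := LinearMap.proj i ∘ₗ h
  obtain ⟨ε, hε⟩ := exists_units_disjoint_iInf_ker_sub_smul (coord f) (coord g) .univ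
    (H := p.ker) (by simpa only [Finset.mem_univ, iInf_pos, ← LinearMap.ker_pi] using! hpg)
  let D : V →ₗ[K] ι → K := LinearMap.pi fun i => coord f i - ε i • coord g i
  obtain ⟨x, hx, hx0⟩ := Submodule.exists_mem_ne_zero_of_ne_bot <|
    LinearMap.ker_ne_bot_of_finrank_lt (f := D) (by simpa using hι)
  refine ⟨x, fun i => ?_, fun hpx => hx0 (Submodule.disjoint_def.1 hε x hpx ?_)⟩
  · have hfg : f x i = ε i • g x i := sub_eq_zero.1 (congrFun hx i)
    rw [hfg, smul_pow, Int.units_sq, one_smul]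
  · simpa only [Finset.mem_univ, iInf_pos, ← LinearMap.ker_pi] using hx

end SignChoice

section SimilarityFactor

variable {R m n o : Type*} [CommRing R] [Fintype m] [Fintype n] {a : R}

theorem vecMul_dotProduct_vecMul (A : Matrix m n R) (x y : m → R) :
    x ᵥ* A ⬝ᵥ y ᵥ* A = x ⬝ᵥ (A * Aᵀ) *ᵥ y := by
  rw [← mulVec_mulVec, mulVec_transpose, dotProduct_mulVec]

theorem vecMul_dotProduct_self_of_mul_transpose_eq_smul_one [DecidableEq m]
    {M : Matrix m n R} (hM : M * Mᵀ = a • 1) (x : m → R) : x ᵥ* M ⬝ᵥ x ᵥ* M = a * (x ⬝ᵥ x) := by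
  rw [vecMul_dotProduct_vecMul, hM, smul_mulVec, one_mulVec, dotProduct_smul, smul_eq_mul]

/-- `a` is a similarity factor of the standard form `∑ xᵢ²` in variables indexed by `n`: some matrix
multiplies this form by `a`. The matrix acts on row vectors, by `x ↦ x ᵥ* M`. -/
def IsSimilarityFactor (n : Type*) [Fintype n] [DecidableEq n] (a : R) : Prop :=
  ∃ M : Matrix n n R, M * Mᵀ = a • 1

theorem isSimilarityFactor_fin_two (x y : R) : IsSimilarityFactor (Fin 2) (x ^ 2 + y ^ 2) := by
  refine ⟨!![x, y; -y, x], ?_⟩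
  ext i j
  fin_cases i <;> fin_cases j <;> simp [Matrix.mul_apply] <;> ring

theorem isSimilarityFactor_fin_four (p q r s : R) :
    IsSimilarityFactor (Fin 4) (p ^ 2 + q ^ 2 + r ^ 2 + s ^ 2) := by
  refine ⟨!![p, q, r, s; -q, p, -s, r; -r, s, p, -q; -s, -r, q, p], ?_⟩
  ext i j
  fin_cases i <;> fin_cases j <;> simp [Matrix.mul_apply, Fin.sum_univ_four] <;> ring

namespace IsSimilarityFactor

variable [DecidableEq m] [DecidableEq n]

theorem reindex (h : IsSimilarityFactor m a) (e : m ≃ n) : IsSimilarityFactor n a := by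
  obtain ⟨M, hM⟩ := h
  refine ⟨M.submatrix e.symm e.symm, ?_⟩
  rw [transpose_submatrix, submatrix_mul_equiv, hM]
  simp [submatrix_smul]

theorem prod [Fintype o] [DecidableEq o] (h : IsSimilarityFactor m a) :
    IsSimilarityFactor (m × o) a := by
  obtain ⟨M, hM⟩ := h
  refine ⟨blockDiagonal fun _ => M, ?_⟩
  rw [blockDiagonal_transpose, ← blockDiagonal_mul, hM]
  exact (blockDiagonal_smul a 1).trans (by rw [blockDiagonal_one])

theorem of_card_dvd_card (h : IsSimilarityFactor m a) (hmn : Fintype.card m ∣ Fintype.card n) :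
    IsSimilarityFactor n a := by
  obtain ⟨k, hk⟩ := hmn
  exact (h.prod (o := Fin k)).reindex (Fintype.equivOfCardEq (by simp [hk]))

end IsSimilarityFactor

end SimilarityFactor

section Cancellation

variable {K ι τ τ' : Type*} [Field K] [Fintype ι] [DecidableEq ι] [Fintype τ] [Fintype τ'] {a : K}

/-- A weak form of Witt cancellation: the form on the `ι`-coordinates is cancelled only at a single
vector, instead of producing a similarity of the `τ`-coordinates. -/
theorem IsSimilarityFactor.exists_dotProduct_eq_mul [NeZero (2 : K)]
    (ha : IsSimilarityFactor ι a) (ha0 : a ≠ 0) (H : Submodule K (ι ⊕ τ → K))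
    (hH : Fintype.card ι < Module.finrank K H) (T : H →ₗ[K] ι ⊕ τ' → K)
    (hT : ∀ c : H, T c ⬝ᵥ T c = a * (c.1 ⬝ᵥ c.1)) :
    ∃ (u : τ → K) (w : τ' → K), u ≠ 0 ∧ w ⬝ᵥ w = a * (u ⬝ᵥ u) := by
  obtain ⟨M, hM⟩ := ha
  let left : H →ₗ[K] ι → K := LinearMap.funLeft K K Sum.inl ∘ₗ H.subtype
  let right : H →ₗ[K] τ → K := LinearMap.funLeft K K Sum.inr ∘ₗ H.subtype
  have hdisj : Disjoint right.ker (M.vecMulLinear ∘ₗ left).ker := by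
    refine Submodule.disjoint_def.2 fun c hcr hcM => Subtype.ext <| funext fun i => ?_
    have hcl : a • left c = 0 := by
      have : left c ᵥ* M ᵥ* Mᵀ = 0 ᵥ* Mᵀ := congrArg (· ᵥ* Mᵀ) hcM
      simpa [vecMul_vecMul, hM, vecMul_smul] using this
    cases i with
    | inl i => exact congrFun ((smul_eq_zero_iff_right ha0).1 hcl) i
    | inr t => exact congrFun hcr t
  obtain ⟨c, hsq, hc⟩ :=
    exists_sq_eq_sq_of_card_lt_finrank (LinearMap.funLeft K K Sum.inl ∘ₗ T) _ right hdisj hH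
  have hleft : (T c ∘ Sum.inl) ⬝ᵥ (T c ∘ Sum.inl) = a * (left c ⬝ᵥ left c) := by
    rw [← vecMul_dotProduct_self_of_mul_transpose_eq_smul_one hM]
    exact Finset.sum_congr rfl fun i _ => by simpa [sq] using hsq i
  have htotal : (T c ∘ Sum.inl) ⬝ᵥ (T c ∘ Sum.inl) + (T c ∘ Sum.inr) ⬝ᵥ (T c ∘ Sum.inr) =
      a * (left c ⬝ᵥ left c + right c ⬝ᵥ right c) := by
    have := hT c
    rwa [dotProduct_block, dotProduct_block c.1] at this
  exact ⟨right c, T c ∘ Sum.inr, hc, by linear_combination htotal - hleft⟩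

end Cancellation

section Equilateral

variable {K ι κ : Type*} [Field K] {a : K}

theorem exists_mul_transpose_eq_of_equilateral [NeZero (2 : K)] [Fintype κ] [DecidableEq ι]
    {v : Matrix ι κ K} (hv : ∀ i j, i ≠ j → (v i - v j) ⬝ᵥ (v i - v j) = 2 * a) :
    ∃ q : ι → K, v * vᵀ = a • 1 + vecMulVec q 1 + vecMulVec 1 q := by
  refine ⟨fun i => (v i ⬝ᵥ v i - a) / 2, ?_⟩
  ext i j
  have hmul : (v * vᵀ) i j = v i ⬝ᵥ v j := rfl
  obtain rfl | hij := eq_or_ne i j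
  · simp only [hmul, Matrix.add_apply, Matrix.smul_apply, one_apply_eq, vecMulVec_apply,
      Pi.one_apply, smul_eq_mul, mul_one, one_mul]
    field
  · have hdist := hv i j hij
    simp only [sub_dotProduct, dotProduct_sub, dotProduct_comm (v j) (v i)] at hdist
    simp only [hmul, Matrix.add_apply, Matrix.smul_apply, one_apply_ne hij, vecMulVec_apply,
      Pi.one_apply, smul_zero, zero_add, mul_one, one_mul]
    field_simp
    linear_combination -hdist

theorem vecMul_dotProduct_self_of_equilateral [NeZero (2 : K)] [Fintype ι] [Fintype κ]
    {v : Matrix ι κ K} (hv : ∀ i j, i ≠ j → (v i - v j) ⬝ᵥ (v i - v j) = 2 * a)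
    {c : ι → K} (hc : ∑ i, c i = 0) :
    c ᵥ* v ⬝ᵥ c ᵥ* v = a * (c ⬝ᵥ c) := by
  classical
  obtain ⟨q, hq⟩ := exists_mul_transpose_eq_of_equilateral hv
  simp only [vecMul_dotProduct_vecMul, hq, add_mulVec, smul_mulVec, one_mulVec, vecMulVec_mulVec,
    dotProduct_add, dotProduct_smul, dotProduct_one, one_dotProduct, hc, smul_eq_mul,
    MulOpposite.op_zero, zero_smul, MulOpposite.smul_eq_mul_unop, MulOpposite.unop_op, zero_mul,
    add_zero]

theorem exists_eq_sq_add_sq_of_mul_eq {x y z w : K} (h : z ^ 2 + w ^ 2 = a * (x ^ 2 + y ^ 2))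
    (hxy : x ^ 2 + y ^ 2 ≠ 0) : ∃ s t : K, a = s ^ 2 + t ^ 2 := by
  refine ⟨(x * z + y * w) / (x ^ 2 + y ^ 2), (x * w - y * z) / (x ^ 2 + y ^ 2), ?_⟩
  field_simp
  linear_combination -(x ^ 2 + y ^ 2) * h

theorem IsSimilarityFactor.exists_eq_sq_add_sq_of_equilateral [LinearOrder K]
    [IsStrictOrderedRing K] [Fintype ι] [DecidableEq ι] (ha : IsSimilarityFactor ι a) (ha0 : a ≠ 0)
    {v : Matrix (ι ⊕ Fin 2) (ι ⊕ Fin 2) K}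
    (hv : ∀ i j, i ≠ j → (v i - v j) ⬝ᵥ (v i - v j) = 2 * a) :
    ∃ x y : K, a = x ^ 2 + y ^ 2 := by
  let σ : (ι ⊕ Fin 2 → K) →ₗ[K] K := ∑ i, LinearMap.proj i
  have hσ : σ ≠ 0 := fun h => by
    simpa [σ] using LinearMap.congr_fun h (Pi.single (Sum.inr 0) 1)
  have hdim : Fintype.card ι < Module.finrank K σ.ker := by
    have := Module.Dual.finrank_ker_add_one_of_ne_zero hσ
    rw [Module.finrank_fintype_fun_eq_card, Fintype.card_sum, Fintype.card_fin] at this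
    omega
  obtain ⟨u, w, hu, huw⟩ := ha.exists_dotProduct_eq_mul ha0 σ.ker hdim
    (v.vecMulLinear.domRestrict σ.ker) fun c =>
      vecMul_dotProduct_self_of_equilateral hv (by simpa [σ] using c.2)
  rw [ne_eq, ← dotProduct_self_eq_zero] at hu
  simp only [dotProduct, Fin.sum_univ_two, ← sq] at hu huw
  exact exists_eq_sq_add_sq_of_mul_eq huw hu

end Equilateral

section Rational

variable {d : ℕ} {a : ℚ}

theorem exists_eq_sum_four_squares_of_nonneg (ha : 0 ≤ a) :
    ∃ p q r s : ℚ, a = p ^ 2 + q ^ 2 + r ^ 2 + s ^ 2 := by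
  lift a to ℚ≥0 using ha
  obtain ⟨p, q, r, s, h⟩ := Nat.sum_four_squares (a.num * a.den)
  refine ⟨p / a.den, q / a.den, r / a.den, s / a.den, ?_⟩
  have hsum : (p ^ 2 + q ^ 2 + r ^ 2 + s ^ 2 : ℚ) = a.num * a.den := mod_cast h
  have hden : (a.den : ℚ) ≠ 0 := by simp
  have ha : (a : ℚ) = a.num / a.den := by simp [← NNRat.cast_def]
  rw [ha]
  field_simp
  linear_combination -hsum

theorem isSimilarityFactor_of_four_dvd_card {n : Type*} [Fintype n] [DecidableEq n] (ha : 0 ≤ a)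
    (hn : 4 ∣ Fintype.card n) : IsSimilarityFactor n a := by
  obtain ⟨p, q, r, s, rfl⟩ := exists_eq_sum_four_squares_of_nonneg ha
  exact (isSimilarityFactor_fin_four p q r s).of_card_dvd_card (by simpa using hn)

theorem IsRegularSimplex.exists_eq_sq_add_sq {v : Fin (d + 1) → Fin (d + 1) → ℚ}
    (hv : IsRegularSimplex d (d + 1) (2 * a) v) (hd : d % 4 = 1) (ha : 0 < a) :
    ∃ x y : ℚ, a = x ^ 2 + y ^ 2 := by
  let e : Fin (d - 1) ⊕ Fin 2 ≃ Fin (d + 1) := finSumFinEquiv.trans (finCongr (by omega))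
  have ha' : IsSimilarityFactor (Fin (d - 1)) a :=
    isSimilarityFactor_of_four_dvd_card ha.le (by simp; omega)
  refine ha'.exists_eq_sq_add_sq_of_equilateral ha.ne' (v := Matrix.submatrix v e e)
    fun i j hij => ?_
  rw [← hv.2 (e i) (e j) (e.injective.ne hij), ← e.sum_comp]
  exact Finset.sum_congr rfl fun k _ => (sq _).symm

theorem IsSimilarityFactor.exists_isRegularSimplex (h : IsSimilarityFactor (Fin (d + 1)) a)
    (ha : a ≠ 0) : ∃ v, IsRegularSimplex d (d + 1) (2 * a) v := by
  obtain ⟨M, hM⟩ := h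
  have hunit : IsUnit M :=
    .of_mul_eq_one (a⁻¹ • Mᵀ) (by rw [Matrix.mul_smul, hM, inv_smul_smul₀ ha])
  refine ⟨M, (linearIndependent_rows_of_isUnit hunit).affineIndependent, fun i j hij => ?_⟩
  have hrow (i : Fin (d + 1)) : M i = Pi.single i 1 ᵥ* M := (single_one_vecMul i M).symm
  calc ∑ k, (M i k - M j k) ^ 2
    _ = (M i - M j) ⬝ᵥ (M i - M j) := by simp [dotProduct, sq]
    _ = a * ((Pi.single i 1 - Pi.single j 1) ⬝ᵥ (Pi.single i 1 - Pi.single j 1)) := by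
      rw [hrow i, hrow j, ← sub_vecMul, vecMul_dotProduct_self_of_mul_transpose_eq_smul_one hM]
    _ = 2 * a := by
      simp only [dotProduct_sub, dotProduct_single, Pi.sub_apply, Pi.single_eq_same,
        Pi.single_eq_of_ne hij, Pi.single_eq_of_ne hij.symm]
      ring

end Rational

/-- For `d ≡ 1 (mod 4)` and `n = d + 1`, the squared edge length `2a` occurs iff `a` is
a sum of two rational squares. -/
theorem codim_one_one_mod_four (d : ℕ) (hd : d % 4 = 1) (a : ℚ) (ha : 0 < a) :
    (∃ v : Fin (d + 1) → Fin (d + 1) → ℚ, IsRegularSimplex d (d + 1) (2 * a) v) ↔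
      ∃ x y : ℚ, a = x ^ 2 + y ^ 2 := by
  constructor
  · rintro ⟨v, hv⟩
    exact hv.exists_eq_sq_add_sq hd ha
  · rintro ⟨x, y, rfl⟩
    have h : IsSimilarityFactor (Fin (d + 1)) (x ^ 2 + y ^ 2) :=
      (isSimilarityFactor_fin_two x y).of_card_dvd_card (by simp; omega)
    exact h.exists_isRegularSimplex ha.ne'
end

section
/- Let d, d' ≥ 1 with d ≤ d', d ≡ d' (mod 4), and equal squarefree parts sf(d+1) = sf(d'+1). Then for every n ≥ d, a positive rational m occurs as the squared edge length of a regular d-simplex in ℚⁿ if and only if it occurs as the squared edge length of a regular d'-simplex in ℚ^{n+d'−d}; i.e. S_ℚ(d, n) = S_ℚ(d', n + d' − d). -/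
/-!
Write `m = 2 * a`, `N = d + 1`, `N' = d' + 1`, and `⟨b⟩` for the form `b * t ^ 2`. Points in a
quadratic space `Q` with all pairwise squared distances `m` amount to an isometric embedding of
`N⟨a⟩` in `Q ⊥ ⟨a * N⟩`: put the centroid of the points `v i` at the origin and send the `i`-th
basis vector to `(v i, 1 / N)`; conversely, move the image of the all-ones vector to `(0, 1)` by a
reflection and project to `Q`. Raising `d` and `n` by `4 * k` adds `4 * k` copies of `⟨a⟩` to the
source and of `⟨1⟩` to the target, while `⟨a * N⟩ ≅ ⟨a * N'⟩` because `N * N'` is a square. Since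
`a` is the norm of a rational quaternion, `⟨a, a, a, a⟩ ≅ ⟨1, 1, 1, 1⟩`, and Witt cancellation
removes the new summands.
-/

open Module QuadraticMap Quaternion

section Polarization

variable {R M N P : Type*} [CommRing R] [AddCommGroup M] [AddCommGroup N] [AddCommGroup P]
  [Module R M] [Module R N] [Module R P]

theorem map_sub_eq_add_sub_polar (Q : QuadraticMap R M P) (x y : M) :
    Q (x - y) = Q x + Q y - polar Q x y := by
  rw [sub_eq_add_neg, QuadraticMap.map_add Q, QuadraticMap.map_neg, polar_neg_right,
    sub_eq_add_neg]

theorem polar_isometry_apply {Q₁ : QuadraticMap R M P} {Q₂ : QuadraticMap R N P} (f : Q₁ →qᵢ Q₂)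
    (x y : M) : polar Q₂ (f x) (f y) = polar Q₁ x y := by
  simp only [polar, ← map_add, QuadraticMap.Isometry.map_app]

end Polarization

section Witt

variable {K V W : Type*} [Field K] [AddCommGroup V] [Module K V] [AddCommGroup W] [Module K W]
  {Q : QuadraticForm K V}

/-- The reflection `z ↦ z - (polar Q e z / Q e) • e` in the vector `e`. It is the identity when
`Q e = 0`, by the convention on division by zero. -/
def orthogonalReflection (Q : QuadraticForm K V) (e : V) : Q →qᵢ Q where
  toLinearMap := preReflection e ((Q e)⁻¹ • Q.polarBilin e)
  map_app' z := by
    change Q (z - ((Q e)⁻¹ * polar Q e z) • e) = Q z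
    rcases eq_or_ne (Q e) 0 with he | he
    · simp [he]
    · rw [map_sub_eq_add_sub_polar, QuadraticMap.map_smul, polar_smul_right, polar_comm Q z e,
        smul_eq_mul, smul_eq_mul]
      field_simp
      ring

theorem orthogonalReflection_apply (e z : V) :
    orthogonalReflection Q e z = z - ((Q e)⁻¹ * polar Q e z) • e :=
  rfl

theorem orthogonalReflection_sub_apply_left (hQ : Q.Anisotropic) {u w : V} (h : Q u = Q w) :
    orthogonalReflection Q (u - w) u = w := by
  rcases eq_or_ne u w with rfl | huw
  · simp [orthogonalReflection_apply]
  have hne : Q (u - w) ≠ 0 := fun h0 => huw (sub_eq_zero.mp (hQ _ h0))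
  have hpolar : polar Q (u - w) u = Q (u - w) := by
    rw [map_sub_eq_add_sub_polar, polar_sub_left, polar_self, polar_comm Q w u, ← h, two_nsmul]
  rw [orthogonalReflection_apply, hpolar, inv_mul_cancel₀ hne, one_smul, sub_sub_cancel]

theorem orthogonalReflection_sub_apply_of_polar_eq {u w z : V} (h : polar Q u z = polar Q w z) :
    orthogonalReflection Q (u - w) z = z := by
  simp [orthogonalReflection_apply, polar_sub_left, h]

theorem exists_isometry_comp_eq {P : QuadraticForm K W} [Module.Finite K W] (hQ : Q.Anisotropic)
    (f g : P →qᵢ Q) : ∃ U : Q →qᵢ Q, U.comp f = g := by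
  classical
  have on_finset (s : Finset W) : ∃ U : Q →qᵢ Q, ∀ z ∈ s, U (f z) = g z := by
    induction s using Finset.induction_on with
    | empty => exact ⟨.id Q, by simp⟩
    | insert a s _ ih =>
      obtain ⟨U, hU⟩ := ih
      refine ⟨(orthogonalReflection Q (U (f a) - g a)).comp U, fun z hz => ?_⟩
      rw [QuadraticMap.Isometry.comp_apply]
      rcases Finset.mem_insert.mp hz with rfl | hz
      · exact orthogonalReflection_sub_apply_left hQ (by simp only [QuadraticMap.Isometry.map_app])
      · -- `g z = U (f z)` pairs equally with `U (f a)` and `g a`, so the reflection fixes it.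
        rw [hU z hz]
        apply orthogonalReflection_sub_apply_of_polar_eq
        rw [← hU z hz, polar_isometry_apply, hU z hz, polar_isometry_apply, polar_isometry_apply]
  obtain ⟨s, hs⟩ := Module.Finite.fg_top (R := K) (M := W)
  obtain ⟨U, hU⟩ := on_finset s
  exact ⟨U, QuadraticMap.Isometry.toLinearMap_injective (LinearMap.ext_on hs hU)⟩

variable {V₁ V₂ : Type*} [AddCommGroup V₁] [Module K V₁] [AddCommGroup V₂] [Module K V₂]
  {Q₁ : QuadraticForm K V₁} {Q₂ : QuadraticForm K V₂} {P : QuadraticForm K W}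

theorem map_fst_of_polar_inr_eq_zero [NeZero (2 : K)] {z : V₂ × W}
    (h : ∀ w, polar (Q₂.prod P) z (0, w) = 0) : Q₂ z.1 = (Q₂.prod P) z := by
  have hself : 2 * P z.2 = 0 := by simpa [polar_self] using h z.2
  rw [prod_apply, (mul_eq_zero.mp hself).resolve_left two_ne_zero, add_zero]

theorem nonempty_isometry_prod_right_iff [NeZero (2 : K)] [Module.Finite K W]
    (h : (Q₂.prod P).Anisotropic) :
    Nonempty (Q₁.prod P →qᵢ Q₂.prod P) ↔ Nonempty (Q₁ →qᵢ Q₂) := by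
  constructor
  · rintro ⟨f⟩
    obtain ⟨U, hU⟩ := exists_isometry_comp_eq h (f.comp (.inr Q₁ P)) (.inr Q₂ P)
    let g := (U.comp f).comp (.inl Q₁ P)
    have horth (v : V₁) (w : W) : polar (Q₂.prod P) (g v) (0, w) = 0 := by
      have hw : (0, w) = U (f (0, w)) := (DFunLike.congr_fun hU w).symm
      rw [hw]
      exact (polar_isometry_apply (U.comp f) _ _).trans (by simp)
    exact ⟨⟨LinearMap.fst K V₂ W ∘ₗ g.toLinearMap, fun v =>
      (map_fst_of_polar_inr_eq_zero (horth v)).trans (g.map_app v)⟩⟩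
  · rintro ⟨f⟩
    exact ⟨⟨f.toLinearMap.prodMap .id, fun z => by simp⟩⟩

end Witt

section Equivalence

variable {R M₁ M₂ M₁' M₂' M₃ N : Type*} [CommSemiring R] [AddCommMonoid M₁] [AddCommMonoid M₂]
  [AddCommMonoid M₁'] [AddCommMonoid M₂'] [AddCommMonoid M₃] [AddCommMonoid N] [Module R M₁]
  [Module R M₂] [Module R M₁'] [Module R M₂'] [Module R M₃] [Module R N]
  {Q₁ : QuadraticMap R M₁ N} {Q₂ : QuadraticMap R M₂ N} {Q₁' : QuadraticMap R M₁' N}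
  {Q₂' : QuadraticMap R M₂' N}

theorem nonempty_isometry_congr (h₁ : Q₁.Equivalent Q₁') (h₂ : Q₂.Equivalent Q₂') :
    Nonempty (Q₁ →qᵢ Q₂) ↔ Nonempty (Q₁' →qᵢ Q₂') := by
  obtain ⟨e₁⟩ := h₁
  obtain ⟨e₂⟩ := h₂
  exact ⟨fun ⟨f⟩ => ⟨(e₂.toIsometry.comp f).comp e₁.symm.toIsometry⟩,
    fun ⟨f⟩ => ⟨(e₂.symm.toIsometry.comp f).comp e₁.toIsometry⟩⟩

theorem prod_right_comm_equivalent (Q₁ : QuadraticMap R M₁ N) (Q₂ : QuadraticMap R M₂ N)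
    (Q₃ : QuadraticMap R M₃ N) :
    ((Q₁.prod Q₂).prod Q₃).Equivalent ((Q₁.prod Q₃).prod Q₂) :=
  ⟨{ LinearEquiv.prodAssoc R M₁ M₂ M₃ ≪≫ₗ
      (LinearEquiv.refl R M₁).prodCongr (LinearEquiv.prodComm R M₂ M₃) ≪≫ₗ
      (LinearEquiv.prodAssoc R M₁ M₃ M₂).symm with
    map_app' := fun _ => add_right_comm _ _ _ }⟩

end Equivalence

section ScaledSumSq

variable {K ι α β : Type*} [Fintype ι] [Fintype α] [Fintype β]

/-- The form `x ↦ a * ∑ i, x i ^ 2`, written `a⟨1, …, 1⟩` in the theory of quadratic forms. -/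
abbrev scaledSumSq [CommRing K] (ι : Type*) [Fintype ι] (a : K) : QuadraticForm K (ι → K) :=
  weightedSumSquares K fun _ : ι => a

theorem polar_scaledSumSq [CommRing K] (a : K) (x y : ι → K) :
    polar (scaledSumSq ι a) x y = 2 * a * ∑ i, x i * y i := by
  simp only [polar, weightedSumSquares_apply, Pi.add_apply, smul_eq_mul, ← Finset.sum_sub_distrib,
    Finset.mul_sum]
  exact Finset.sum_congr rfl fun i _ => by ring

theorem scaledSumSq_single_sub_single [CommRing K] [DecidableEq ι] (a : K) {i j : ι}
    (hij : i ≠ j) : scaledSumSq ι a (Pi.single i 1 - Pi.single j 1) = 2 * a := by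
  have hsingle (k : ι) : scaledSumSq ι a (Pi.single k 1) = a := by
    simp [weightedSumSquares_apply, Pi.single_apply]
  rw [map_sub_eq_add_sub_polar, polar_scaledSumSq, hsingle, hsingle]
  simp [Pi.single_apply, hij.symm, two_mul]

theorem scaledSumSq_sub_const_add [CommRing K] {a : K} {x : ι → K} {t : K}
    (ht : ∑ i, x i = Fintype.card ι * t) :
    scaledSumSq ι a (x - fun _ => t) + a * Fintype.card ι * (t * t) = scaledSumSq ι a x := by
  have hconst : scaledSumSq ι a (fun _ => t) = a * Fintype.card ι * (t * t) := by
    simp only [weightedSumSquares_apply, smul_eq_mul, Finset.sum_const, Finset.card_univ,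
      nsmul_eq_mul]
    ring
  rw [map_sub_eq_add_sub_polar, polar_scaledSumSq, ← Finset.sum_mul, ht, hconst]
  ring

variable (ι) in
theorem scaledSumSq_posDef [Field K] [LinearOrder K] [IsStrictOrderedRing K] {a : K} (ha : 0 < a) :
    (scaledSumSq ι a).PosDef := by
  intro x hx
  obtain ⟨i, hi⟩ := Function.ne_iff.mp hx
  rw [weightedSumSquares_apply]
  exact Finset.sum_pos' (fun j _ => mul_nonneg ha.le (mul_self_nonneg _))
    ⟨i, Finset.mem_univ i, mul_pos ha (mul_self_pos.mpr hi)⟩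

theorem scaledSumSq_equivalent_prod [CommRing K] (a : K)
    (h : Fintype.card ι = Fintype.card α + Fintype.card β) :
    (scaledSumSq ι a).Equivalent ((scaledSumSq α a).prod (scaledSumSq β a)) :=
  let e : ι ≃ α ⊕ β := Fintype.equivOfCardEq (h.trans Fintype.card_sum.symm)
  ⟨{ LinearEquiv.funCongrLeft K K e.symm ≪≫ₗ LinearEquiv.sumArrowLequivProdArrow α β K K with
    map_app' := fun x => by
      simp [← Fintype.sum_equiv e.symm _ _ fun _ => rfl, Fintype.sum_sum_type] }⟩

theorem scaledSumSq_prod_equivalent_pi [CommRing K] (a : K) :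
    (scaledSumSq (β × ι) a).Equivalent (QuadraticMap.pi fun _ : β => scaledSumSq ι a) :=
  ⟨{ LinearEquiv.curry K K β ι with
    map_app' := fun x => by
      simp [Fintype.sum_prod_type] }⟩

end ScaledSumSq

section UnaryForm

/-- The form `t ↦ b * (t * t)`, written `⟨b⟩` in the theory of quadratic forms. -/
abbrev unaryForm {K : Type*} [CommRing K] (b : K) : QuadraticForm K K :=
  b • QuadraticMap.sq

variable {K : Type*} [Field K]

theorem unaryForm_posDef [LinearOrder K] [IsStrictOrderedRing K] {b : K} (hb : 0 < b) :
    (unaryForm b).PosDef :=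
  PosDef.smul (Q := QuadraticMap.sq) (fun _ hx => mul_self_pos.mpr hx) hb

theorem unaryForm_equivalent {b b' : K} (hb : b ≠ 0) (hb' : b' ≠ 0) (h : IsSquare (b * b')) :
    (unaryForm b).Equivalent (unaryForm b') := by
  obtain ⟨r, hr⟩ := h
  have hr0 : r ≠ 0 := by
    rintro rfl
    simp [hb, hb'] at hr
  refine ⟨{ LinearEquiv.smulOfNeZero K K (r / b') (div_ne_zero hr0 hb') with
    map_app' := fun x => ?_ }⟩
  change b' * ((r / b' * x) * (r / b' * x)) = b * (x * x)
  field_simp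
  linear_combination -x ^ 2 * hr

end UnaryForm

section Quaternion

theorem exists_quaternion_normSq_eq_natCast (K : Type*) [CommRing K] (n : ℕ) :
    ∃ q : ℍ[K], normSq q = n := by
  obtain ⟨a, b, c, d, h⟩ := Nat.sum_four_squares n
  refine ⟨(⟨a, b, c, d⟩ : ℍ[K,-1,0,-1]), (normSq_def' _).trans ?_⟩
  push_cast [← h]
  rfl

variable {K : Type*} [Field K] [LinearOrder K] [IsStrictOrderedRing K]

variable (K) in
theorem exists_quaternion_normSq_eq_nnratCast (a : ℚ≥0) : ∃ q : ℍ[K], normSq q = a := by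
  obtain ⟨p, hp⟩ := exists_quaternion_normSq_eq_natCast K a.num
  obtain ⟨q, hq⟩ := exists_quaternion_normSq_eq_natCast K a.den
  exact ⟨p / q, by rw [map_div₀, hp, hq, NNRat.cast_def]⟩

theorem scaledSumSq_linearEquivTuple {R : Type*} [CommRing R] (c : R) (z : ℍ[R]) :
    scaledSumSq (Fin 4) c (QuaternionAlgebra.linearEquivTuple (-1) 0 (-1) z) = c * normSq z := by
  rw [normSq_def', weightedSumSquares_apply, Fin.sum_univ_four]
  change c * (z.re * z.re) + c * (z.imI * z.imI) + c * (z.imJ * z.imJ) + c * (z.imK * z.imK) = _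
  ring

theorem scaledSumSq_normSq_equivalent {q : ℍ[K]} (hq : q ≠ 0) :
    (scaledSumSq (Fin 4) (normSq q)).Equivalent (scaledSumSq (Fin 4) (1 : K)) := by
  let coords : ℍ[K] ≃ₗ[K] (Fin 4 → K) := QuaternionAlgebra.linearEquivTuple (-1) 0 (-1)
  let mulLeft : ℍ[K] ≃ₗ[K] ℍ[K] :=
    .ofLinearMap (.mulLeft K q) (.mulLeft K q⁻¹)
      (LinearMap.ext (mul_inv_cancel_left₀ hq)) (LinearMap.ext (inv_mul_cancel_left₀ hq))
  refine ⟨{ coords.symm ≪≫ₗ mulLeft ≪≫ₗ coords with map_app' := fun x => ?_ }⟩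
  obtain ⟨z, rfl⟩ := coords.surjective x
  calc scaledSumSq (Fin 4) 1 (coords (q * coords.symm (coords z)))
    _ = scaledSumSq (Fin 4) 1 (coords (q * z)) := by rw [coords.symm_apply_apply]
    _ = 1 * normSq (q * z) := scaledSumSq_linearEquivTuple _ _
    _ = normSq q * normSq z := by rw [one_mul, map_mul]
    _ = scaledSumSq (Fin 4) (normSq q) (coords z) := (scaledSumSq_linearEquivTuple _ z).symm

theorem scaledSumSq_prod_fin_four_equivalent (β : Type*) [Fintype β] {a : ℚ≥0} (ha : a ≠ 0) :
    (scaledSumSq (β × Fin 4) (a : K)).Equivalent (scaledSumSq (β × Fin 4) 1) := by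
  obtain ⟨q, hq⟩ := exists_quaternion_normSq_eq_nnratCast K a
  have hq0 : q ≠ 0 := by
    rintro rfl
    simp [eq_comm, ha] at hq
  rw [← hq]
  exact (scaledSumSq_prod_equivalent_pi _).trans
    ((Equivalent.pi fun _ => scaledSumSq_normSq_equivalent hq0).trans
      (scaledSumSq_prod_equivalent_pi 1).symm)

end Quaternion

section Equidistant

/-- The points `v i` are pairwise at squared distance `m`, measured by the form `Q`. -/
def IsEquidistant {R V ι : Type*} [CommRing R] [AddCommGroup V] [Module R V]
    (Q : QuadraticForm R V) (m : R) (v : ι → V) : Prop :=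
  Pairwise fun i j => Q (v i - v j) = m

theorem two_mul_map_linearCombination_of_sum_eq_zero {R V ι : Type*} [CommRing R] [AddCommGroup V]
    [Module R V] [Fintype ι] (Q : QuadraticForm R V) (v : ι → V) {x : ι → R} (hx : ∑ i, x i = 0) :
    2 * Q (Fintype.linearCombination R v x) = -∑ i, ∑ j, x i * x j * Q (v i - v j) := by
  have expand : 2 * Q (Fintype.linearCombination R v x) =
      ∑ i, ∑ j, x i * x j * polar Q (v i) (v j) := by
    rw [two_mul, ← two_nsmul, ← polar_self, ← polarBilin_apply_apply]
    simp only [Fintype.linearCombination_apply, map_sum, LinearMap.sum_apply, map_smul,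
      LinearMap.smul_apply, polarBilin_apply_apply, smul_eq_mul, mul_assoc, Finset.mul_sum]
    exact Finset.sum_comm.trans (by simp only [mul_left_comm])
  have hpolar (i j : ι) : x i * x j * polar Q (v i) (v j) =
      x i * x j * Q (v i) + x i * x j * Q (v j) - x i * x j * Q (v i - v j) := by
    rw [map_sub_eq_add_sub_polar]
    ring
  have hleft : ∑ i, ∑ j, x i * x j * Q (v i) = 0 := by
    simp only [← Finset.sum_mul, ← Finset.mul_sum, hx, mul_zero, zero_mul, Finset.sum_const_zero]
  have hright : ∑ i, ∑ j, x i * x j * Q (v j) = 0 := by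
    rw [Finset.sum_comm]
    simp only [← Finset.sum_mul, hx, zero_mul, Finset.sum_const_zero]
  rw [expand]
  simp only [hpolar, Finset.sum_add_distrib, Finset.sum_sub_distrib, hleft, hright]
  ring

variable {K V ι : Type*} [Field K] [AddCommGroup V] [Module K V] {Q : QuadraticForm K V}
  [Fintype ι] {a : K} {v : ι → V}

theorem IsEquidistant.map_linearCombination [NeZero (2 : K)] (hv : IsEquidistant Q (2 * a) v)
    {x : ι → K} (hx : ∑ i, x i = 0) :
    Q (Fintype.linearCombination K v x) = scaledSumSq ι a x := by
  classical
  have hterm (i j : ι) : x i * x j * Q (v i - v j) =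
      2 * a * (x i * x j) - if i = j then 2 * a * (x i * x i) else 0 := by
    split_ifs with hij
    · simp [hij]
    · rw [hv hij]
      ring
  apply mul_left_cancel₀ (two_ne_zero (α := K))
  rw [two_mul_map_linearCombination_of_sum_eq_zero Q v hx]
  simp [hterm, ← Finset.mul_sum, hx, weightedSumSquares_apply, mul_assoc]

theorem IsEquidistant.affineIndependent [NeZero (2 : K)] (hv : IsEquidistant Q (2 * a) v)
    (ha : (scaledSumSq ι a).Anisotropic) : AffineIndependent K v := by
  rw [affineIndependent_iff_of_fintype]
  intro x hx h0
  rw [Finset.univ.weightedVSub_eq_linear_combination hx, ← Fintype.linearCombination_apply] at h0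
  have hx0 : x = 0 := ha x (by rw [← hv.map_linearCombination hx, h0, QuadraticMap.map_zero])
  exact congrFun hx0

theorem IsEquidistant.nonempty_isometry [CharZero K] [Nonempty ι]
    (hv : IsEquidistant Q (2 * a) v) :
    Nonempty (scaledSumSq ι a →qᵢ Q.prod (unaryForm (a * Fintype.card ι))) := by
  let mean : (ι → K) →ₗ[K] K := (Fintype.card ι : K)⁻¹ • Fintype.linearCombination K 1
  let centre : (ι → K) →ₗ[K] (ι → K) := .id - LinearMap.pi fun _ => mean
  have card_mul_mean (x : ι → K) : ∑ i, x i = Fintype.card ι * mean x := by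
    simp [mean, Fintype.linearCombination_apply]
  have sum_centre (x : ι → K) : ∑ i, centre x i = 0 := by
    change ∑ i, (x i - mean x) = 0
    rw [Finset.sum_sub_distrib, card_mul_mean, Finset.sum_const, Finset.card_univ, nsmul_eq_mul,
      sub_self]
  refine ⟨⟨(Fintype.linearCombination K v ∘ₗ centre).prod mean, fun x => ?_⟩⟩
  calc Q (Fintype.linearCombination K v (centre x)) + a * Fintype.card ι * (mean x * mean x)
    _ = scaledSumSq ι a x := by
      rw [hv.map_linearCombination (sum_centre x)]
      exact scaledSumSq_sub_const_add (card_mul_mean x)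

theorem exists_isEquidistant_of_isometry [NeZero (2 : K)]
    (hQ : (Q.prod (unaryForm (a * Fintype.card ι))).Anisotropic)
    (f : scaledSumSq ι a →qᵢ Q.prod (unaryForm (a * Fintype.card ι))) :
    ∃ v : ι → V, IsEquidistant Q (2 * a) v := by
  classical
  obtain ⟨U, hU⟩ : ∃ U : _ →qᵢ _, U (f 1) = ((0, 1) : V × K) :=
    ⟨_, orthogonalReflection_sub_apply_left hQ (by simp [weightedSumSquares_apply, mul_comm])⟩
  let g := U.comp f
  have map_fst {x : ι → K} (hx : ∑ i, x i = 0) : Q (g x).1 = scaledSumSq ι a x := by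
    rw [← g.map_app]
    refine map_fst_of_polar_inr_eq_zero fun t => ?_
    have ht : ((0, t) : V × K) = g (t • 1) := by
      rw [map_smul, QuadraticMap.Isometry.comp_apply, hU, Prod.smul_mk, smul_zero, smul_eq_mul,
        mul_one]
    rw [ht, polar_isometry_apply, polar_smul_right, polar_scaledSumSq]
    simp only [Pi.one_apply, mul_one, hx, mul_zero, smul_zero]
  refine ⟨fun i => (g (Pi.single i 1)).1, fun i j hij => ?_⟩
  have hsum : ∑ k, (Pi.single i 1 - Pi.single j 1 : ι → K) k = 0 := by simp
  calc Q ((g (Pi.single i 1)).1 - (g (Pi.single j 1)).1)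
    _ = Q (g (Pi.single i 1 - Pi.single j 1)).1 :=
      congrArg (Q ·.1) (map_sub g (Pi.single i 1) (Pi.single j 1)).symm
    _ = scaledSumSq ι a (Pi.single i 1 - Pi.single j 1) := map_fst hsum
    _ = 2 * a := scaledSumSq_single_sub_single a hij

theorem exists_isEquidistant_iff_nonempty_isometry [CharZero K] [Nonempty ι]
    (hQ : (Q.prod (unaryForm (a * Fintype.card ι))).Anisotropic) :
    (∃ v : ι → V, IsEquidistant Q (2 * a) v) ↔
      Nonempty (scaledSumSq ι a →qᵢ Q.prod (unaryForm (a * Fintype.card ι))) :=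
  ⟨fun ⟨_, hv⟩ => hv.nonempty_isometry, fun ⟨f⟩ => exists_isEquidistant_of_isometry hQ f⟩

end Equidistant

section Stabilization

variable {K ι ι' κ κ' : Type*} [Field K] [LinearOrder K] [IsStrictOrderedRing K]
  [Fintype ι] [Fintype ι'] [Fintype κ] [Fintype κ']

theorem exists_isEquidistant_iff_of_card_eq_add_mul_four [Nonempty ι] {a : ℚ≥0} (ha : a ≠ 0)
    {k : ℕ} (hι : Fintype.card ι' = Fintype.card ι + k * 4)
    (hκ : Fintype.card κ' = Fintype.card κ + k * 4)
    (hsq : IsSquare (Fintype.card ι * Fintype.card ι')) :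
    (∃ v : ι → κ → K, IsEquidistant (scaledSumSq κ 1) (2 * (a : K)) v) ↔
      ∃ v : ι' → κ' → K, IsEquidistant (scaledSumSq κ' 1) (2 * (a : K)) v := by
  have : Nonempty ι' := Fintype.card_pos_iff.mp (hι ▸ Nat.add_pos_left Fintype.card_pos _)
  have ha0 : (0 : K) < a := by exact_mod_cast pos_iff_ne_zero.mpr ha
  have hb : (0 : K) < a * Fintype.card ι := mul_pos ha0 (mod_cast Fintype.card_pos)
  have hb' : (0 : K) < a * Fintype.card ι' := mul_pos ha0 (mod_cast Fintype.card_pos)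
  let B := Fin k × Fin 4
  have hdomain : (scaledSumSq ι' (a : K)).Equivalent
      ((scaledSumSq ι (a : K)).prod (scaledSumSq B 1)) :=
    (scaledSumSq_equivalent_prod _ (by simpa [B] using hι)).trans
      (.prod (.refl _) (scaledSumSq_prod_fin_four_equivalent _ ha))
  have hbb' : IsSquare ((a * Fintype.card ι') * (a * Fintype.card ι) : K) := by
    rw [mul_mul_mul_comm, mul_comm (Fintype.card ι' : K)]
    exact (IsSquare.mul_self _).mul (mod_cast hsq.map (Nat.castRingHom K))
  have hcodomain : ((scaledSumSq κ' (1 : K)).prod (unaryForm (a * Fintype.card ι' : K))).Equivalent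
      (((scaledSumSq κ 1).prod (unaryForm (a * Fintype.card ι : K))).prod (scaledSumSq B 1)) :=
    (Equivalent.prod (scaledSumSq_equivalent_prod _ (by simpa [B] using hκ))
      (unaryForm_equivalent hb'.ne' hb.ne' hbb')).trans (prod_right_comm_equivalent _ _ _)
  have hpos := (scaledSumSq_posDef κ (one_pos (α := K))).prod (unaryForm_posDef hb)
  have hpos' := (scaledSumSq_posDef κ' (one_pos (α := K))).prod (unaryForm_posDef hb')
  rw [exists_isEquidistant_iff_nonempty_isometry hpos.anisotropic,
    exists_isEquidistant_iff_nonempty_isometry hpos'.anisotropic,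
    nonempty_isometry_congr hdomain hcodomain,
    nonempty_isometry_prod_right_iff (hpos.prod (scaledSumSq_posDef B one_pos)).anisotropic]

end Stabilization

section RegularSimplex

variable {d n : ℕ} {m : ℚ} {v : Fin (d + 1) → Fin n → ℚ}

theorem isEquidistant_scaledSumSq_one_iff :
    IsEquidistant (scaledSumSq (Fin n) 1) m v ↔
      ∀ i j, i ≠ j → ∑ k, (v i k - v j k) ^ 2 = m := by
  simp only [IsEquidistant, Pairwise, weightedSumSquares_apply, one_smul, Pi.sub_apply, _root_.sq]

theorem IsRegularSimplex.pos (hd : 1 ≤ d) (hv : IsRegularSimplex d n m v) : 0 < m := by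
  have : Nontrivial (Fin (d + 1)) := Fin.nontrivial_iff_two_le.mpr (by lia)
  obtain ⟨i, j, hij⟩ := exists_pair_ne (Fin (d + 1))
  rw [← isEquidistant_scaledSumSq_one_iff.mpr hv.2 hij]
  exact scaledSumSq_posDef _ one_pos _ (sub_ne_zero.mpr (hv.1.injective.ne hij))

theorem exists_isRegularSimplex_iff (hd : 1 ≤ d) :
    (∃ v, IsRegularSimplex d n m v) ↔
      0 < m ∧ ∃ v : Fin (d + 1) → Fin n → ℚ, IsEquidistant (scaledSumSq (Fin n) 1) m v := by
  simp only [isEquidistant_scaledSumSq_one_iff]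
  constructor
  · rintro ⟨v, hv⟩
    exact ⟨hv.pos hd, v, hv.2⟩
  · rintro ⟨hm, v, hv⟩
    have hequi : IsEquidistant (scaledSumSq (Fin n) 1) (2 * (m / 2)) v := by
      rwa [mul_div_cancel₀ m two_ne_zero, isEquidistant_scaledSumSq_one_iff]
    exact ⟨v, hequi.affineIndependent (scaledSumSq_posDef _ (half_pos hm)).anisotropic, hv⟩

end RegularSimplex

theorem isSquare_mul_of_squarefree_part {m n : ℕ}
    (h : ∀ s, Squarefree s → (∃ u, m = s * u ^ 2) → ∃ u, n = s * u ^ 2) : IsSquare (m * n) := by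
  obtain ⟨s, u, rfl, hs⟩ := Nat.sq_mul_squarefree m
  obtain ⟨w, rfl⟩ := h s hs ⟨u, mul_comm _ _⟩
  exact ⟨s * u * w, by ring⟩

/-- Stabilization: if `d ≤ d'`, `d ≡ d' (mod 4)` and `sf (d+1) = sf (d'+1)`, then
`S_ℚ(d, n) = S_ℚ(d', n + d' - d)` for every `n ≥ d`. -/
theorem S_stabilization (d d' : ℕ) (hd : 1 ≤ d) (hdd' : d ≤ d') (hmod : d % 4 = d' % 4)
    (hsf : ∀ s : ℕ, Squarefree s →
      ((∃ u : ℕ, d + 1 = s * u ^ 2) ↔ (∃ u : ℕ, d' + 1 = s * u ^ 2)))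
    (n : ℕ) (hn : d ≤ n) (m : ℚ) :
    (∃ v : Fin (d + 1) → Fin n → ℚ, IsRegularSimplex d n m v) ↔
      ∃ v : Fin (d' + 1) → Fin (n + (d' - d)) → ℚ, IsRegularSimplex d' (n + (d' - d)) m v := by
  rw [exists_isRegularSimplex_iff hd, exists_isRegularSimplex_iff (hd.trans hdd')]
  refine and_congr_right fun hm => ?_
  obtain ⟨a, rfl⟩ : ∃ a : ℚ≥0, m = 2 * a := ⟨⟨m / 2, (half_pos hm).le⟩, by push_cast; ring⟩
  obtain ⟨k, hk⟩ : ∃ k, d' = d + k * 4 := ⟨(d' - d) / 4, by lia⟩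
  have ha : a ≠ 0 := by rintro rfl; simp at hm
  have hsq : IsSquare ((d + 1) * (d' + 1)) :=
    isSquare_mul_of_squarefree_part fun s hs => (hsf s hs).mp
  exact exists_isEquidistant_iff_of_card_eq_add_mul_four ha (k := k) (by simp; lia) (by simp; lia)
    (by simpa using hsq)
end
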